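/- Let R be a commutative Noetherian ring, 𝔞 a proper ideal of R, N a finitely generated 𝔞-torsion R-module, M an R-module, and s ≥ 0, t ≥ 0 integers. Suppose that: (1) Ext^{s+t−i}_R(N, H^i_𝔞(M)) = 0 for all integers i with 0 ≤ i < t or t+1 ≤ i ≤ s+t; (2) Ext^{s+1+i}_R(N, H^{t−i}_𝔞(M)) = 0 for all integers 0 ≤ i ≤ t; (3) Ext^{s−1−i}_R(N, H^{t+i}_𝔞(M)) = 0 for all integers 0 ≤ i ≤ s−1. Then there is an isomorphism of R-modules Ext^{s+t}_R(N, M) ≅ Ext^{s}_R(N, H^{t}_𝔞(M)). -/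

import Mathlib

open CategoryTheory

universe u

/-- The `R`-module `Ext^i_R(N, M)` for two `R`-modules (objects of `ModuleCat R`). -/
noncomputable def extObj {R : Type u} [CommRing R] (N M : ModuleCat.{u} R) (i : ℕ) :
    ModuleCat.{u} R :=
  ((Ext R (ModuleCat.{u} R) i).obj (Opposite.op N)).obj M

/-- The `R`-module `Ext^i_R(R/𝔞, M)`. -/
noncomputable def extIdeal {R : Type u} [CommRing R] (𝔞 : Ideal R) (i : ℕ)
    (M : ModuleCat.{u} R) : ModuleCat.{u} R :=
  extObj (ModuleCat.of R (R ⧸ 𝔞)) M i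

/-- An `R`-module `M` is `𝔞`-cofinite if `Supp_R M ⊆ V(𝔞)` and `Ext^i_R(R/𝔞, M)` is a finitely
generated `R`-module for every `i ≥ 0`. -/
def IsCofinite {R : Type u} [CommRing R] (𝔞 : Ideal R) (M : ModuleCat.{u} R) : Prop :=
  Module.support R M ⊆ PrimeSpectrum.zeroLocus (𝔞 : Set R) ∧
    ∀ i : ℕ, Module.Finite R (extIdeal 𝔞 i M)

/-- The Krull dimension `dim_R M` of an `R`-module `M`: the Krull dimension of its support,
i.e. the supremum of `dim R/𝔭` over primes `𝔭` in the support of `M`. -/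
noncomputable def moduleDim (R : Type u) [CommRing R] (M : Type u) [AddCommGroup M]
    [Module R M] : WithBot ℕ∞ :=
  Order.krullDim (Module.support R M)

/-- An `R`-module `M` is in `FD_{≤n}` if there is a finitely generated submodule `N ⊆ M`
with `dim_R (M/N) ≤ n`. -/
def MemFD (R : Type u) [CommRing R] (n : ℕ) (M : Type u) [AddCommGroup M] [Module R M] : Prop :=
  ∃ N : Submodule R M, N.FG ∧ moduleDim R (M ⧸ N) ≤ (n : WithBot ℕ∞)

/-- An `R`-module `M` is `𝔞`-torsion if every element is annihilated by some power of `𝔞`. -/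
def IsTorsionIdeal {R : Type u} [CommRing R] (𝔞 : Ideal R) (M : Type u) [AddCommGroup M]
    [Module R M] : Prop :=
  ∀ m : M, ∃ n : ℕ, ∀ a ∈ 𝔞 ^ n, a • m = 0

/-- The arithmetic rank of an ideal `𝔞`: the least `n` such that there exist `a₁, …, aₙ ∈ R`
with `Rad (a₁, …, aₙ) = Rad 𝔞`. -/
noncomputable def arithRank {R : Type u} [CommRing R] (𝔞 : Ideal R) : ℕ :=
  sInf {n : ℕ | ∃ f : Fin n → R, (Ideal.span (Set.range f)).radical = 𝔞.radical}

/-!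
Write `Γ M` for the `𝔞`-torsion submodule of `M`. Over a Noetherian ring, Artin–Rees shows that
`Γ E` is injective whenever `E` is. Taking for `E` an injective module containing `M`, the quotient
`M ⧸ Γ M` therefore embeds in the injective module `E ⧸ Γ E`, which has no torsion; let `M'` be the
cokernel. A torsion module `N` has `Ext^n(N, E ⧸ Γ E) = 0` for all `n`, so
`Ext^{n+1}(N, M ⧸ Γ M) ≅ Ext^n(N, M')`; taking `N = R ⧸ 𝔞 ^ k` and the limit over `k`, and using
that torsion modules have no higher local cohomology, also `H^{i+1}(M) ≅ H^i(M')`. Passing from `M`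
to `M'` thus lowers `t` by one, the long exact sequence of `0 → Γ M → M → M ⧸ Γ M → 0` giving
`Ext^n(N, M) ≅ Ext^n(N, M ⧸ Γ M)`; for `t = 0` it gives `Ext^n(N, M) ≅ Ext^n(N, H^0(M))`.
-/

section LinearEquiv

variable {R M M₁ M₂ : Type*} [Ring R] [AddCommGroup M] [AddCommGroup M₁] [AddCommGroup M₂]
  [Module R M] [Module R M₁] [Module R M₂]

/-- The isomorphism `M₁ ≃ M₂` identifying two quotients `f : M → M₁` and `g : M → M₂` of `M` by
the same kernel. -/
noncomputable def linearEquivOfKerEq (f : M →ₗ[R] M₁) (g : M →ₗ[R] M₂)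
    (hf : Function.Surjective f) (hg : Function.Surjective g)
    (h : LinearMap.ker f = LinearMap.ker g) : M₁ ≃ₗ[R] M₂ :=
  (f.quotKerEquivOfSurjective hf).symm ≪≫ₗ Submodule.quotEquivOfEq _ _ h ≪≫ₗ
    g.quotKerEquivOfSurjective hg

lemma linearEquivOfKerEq_apply (f : M →ₗ[R] M₁) (g : M →ₗ[R] M₂)
    (hf : Function.Surjective f) (hg : Function.Surjective g)
    (h : LinearMap.ker f = LinearMap.ker g) (x : M) :
    linearEquivOfKerEq f g hf hg h (f x) = g x := by
  have : (f.quotKerEquivOfSurjective hf).symm (f x) = Submodule.Quotient.mk x :=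
    (LinearEquiv.symm_apply_eq _).2 rfl
  simp only [linearEquivOfKerEq, LinearEquiv.trans_apply, this]
  rfl

end LinearEquiv

section ExtComparison

open Opposite HomologicalComplex

universe t w v u'

lemma homologyπ_eq_zero_iff {R : Type t} [Ring R] {ι : Type*} {c : ComplexShape ι}
    (K : HomologicalComplex (ModuleCat.{v} R) c) (n : ι) (z : K.cycles n) :
    K.homologyπ n z = 0 ↔ ∃ y, K.d (c.prev n) n y = K.iCycles n z := by
  have exact := (ShortComplex.moduleCat_exact_iff _).1 (ShortComplex.exact_of_g_is_cokernel
    (.mk _ _ (K.toCycles_comp_homologyπ (c.prev n) n)) (K.homologyIsCokernel _ n rfl))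
  have toCycles_apply (y) : K.iCycles n (K.toCycles (c.prev n) n y) = K.d (c.prev n) n y :=
    congr($(K.toCycles_i (c.prev n) n) y)
  refine ⟨fun hz ↦ ?_, fun ⟨y, hy⟩ ↦ ?_⟩
  · obtain ⟨y, rfl⟩ := exact z hz
    exact ⟨y, (toCycles_apply y).symm⟩
  · obtain rfl : K.toCycles (c.prev n) n y = z :=
      (ModuleCat.mono_iff_injective (K.iCycles n)).1 inferInstance ((toCycles_apply y).trans hy)
    exact congr($(K.toCycles_comp_homologyπ (c.prev n) n) y)

variable {R : Type t} [Ring R] {C : Type u'} [Category.{v} C] [Abelian C] [Linear R C]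

section Cocycles

variable (R) in
/-- A cocycle of the complex `Hom(K, Y)`, viewed as a morphism `K.X n ⟶ Y`. -/
noncomputable def cyclesToHom (K : ChainComplex C ℕ) (Y : C) (n : ℕ) :
    (K.linearYonedaObj R Y).cycles n →ₗ[R] (K.X n ⟶ Y) :=
  ((K.linearYonedaObj R Y).iCycles n).hom

variable (K : ChainComplex C ℕ) {Y : C} {n : ℕ}

lemma d_comp_cyclesToHom (z : (K.linearYonedaObj R Y).cycles n) :
    K.d (n + 1) n ≫ cyclesToHom R K Y n z = 0 :=
  congr($((K.linearYonedaObj R Y).iCycles_d n (n + 1)) z)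

lemma exists_cyclesToHom_eq {f : K.X n ⟶ Y} (hf : K.d (n + 1) n ≫ f = 0) :
    ∃ z, cyclesToHom R K Y n z = f :=
  ⟨(K.linearYonedaObj R Y).cyclesMk f (n + 1) (CochainComplex.next ℕ n) hf,
    (K.linearYonedaObj R Y).i_cyclesMk f (n + 1) (CochainComplex.next ℕ n) hf⟩

lemma homologyπ_eq_zero_iff_cyclesToHom (z : (K.linearYonedaObj R Y).cycles n) :
    (K.linearYonedaObj R Y).homologyπ n z = 0 ↔
      ∃ y, K.d n ((ComplexShape.up ℕ).prev n) ≫ y = cyclesToHom R K Y n z :=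
  homologyπ_eq_zero_iff (K.linearYonedaObj R Y) n z

variable {K} {K' : ChainComplex C ℕ}

variable (R) in
/-- Precomposition of cochains with a morphism of complexes. -/
noncomputable abbrev linearYonedaMap (φ : K ⟶ K') (Y : C) :
    K'.linearYonedaObj R Y ⟶ K.linearYonedaObj R Y :=
  (unopFunctor _ _).map ((((linearYoneda R C).obj Y).rightOp.mapHomologicalComplex _).map φ).op

lemma cyclesToHom_cyclesMap (φ : K ⟶ K') (z : (K'.linearYonedaObj R Y).cycles n) :
    cyclesToHom R K Y n (cyclesMap (linearYonedaMap R φ Y) n z) =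
      φ.f n ≫ cyclesToHom R K' Y n z :=
  congr($(cyclesMap_i (linearYonedaMap R φ Y) n) z)

end Cocycles

section

variable [HasExt.{w} C] {X X' : C} (P : ProjectiveResolution X)

open CochainComplex.HomComplex in
lemma extMk_eq_zero_iff_exists_prev {Y : C} {n : ℕ} (f : P.complex.X n ⟶ Y)
    (hf : P.complex.d (n + 1) n ≫ f = 0) :
    P.extMk f (n + 1) rfl hf = 0 ↔
      ∃ y, P.complex.d n ((ComplexShape.up ℕ).prev n) ≫ y = f := by
  obtain - | n := n
  · have d_eq_zero : P.complex.d 0 ((ComplexShape.up ℕ).prev 0) = 0 :=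
      P.complex.shape _ _ (by simp)
    have cochain_d_eq_zero : P.cochainComplex.d (-((0 : ℕ) : ℤ)) 1 = 0 :=
      (P.cochainComplex.isZero_of_isStrictlyLE 0 1).eq_of_tgt _ _
    rw [← P.extEquivCohomologyClass.apply_eq_iff_eq, P.extEquivCohomologyClass_extMk,
      P.extEquivCohomologyClass_zero, CohomologyClass.mk_eq_zero_iff,
      Cocycle.toSingleMk_mem_coboundaries_iff _ _ _ _ _ 1 (by simp), d_eq_zero]
    simp only [cochain_d_eq_zero, Limits.zero_comp, exists_const, ← Iso.inv_comp_eq,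
      Limits.comp_zero]
  · rw [P.extMk_eq_zero_iff _ _ _ _ n rfl, CochainComplex.prev_nat_succ]

variable (R) in
/-- The class in `Abelian.Ext X Y n` of a cocycle of `Hom(P, Y)`. -/
noncomputable def cyclesToAbelianExt (Y : C) (n : ℕ) :
    (P.complex.linearYonedaObj R Y).cycles n →ₗ[R] Abelian.Ext.{w} X Y n where
  toFun z := P.extMk (cyclesToHom R P.complex Y n z) (n + 1) rfl (d_comp_cyclesToHom _ z)
  map_add' z z' := by
    simp only [map_add, P.add_extMk]
  map_smul' r z := by
    simp only [map_smul, RingHom.id_apply, Abelian.Ext.smul_eq_comp_mk₀, P.extMk_comp_mk₀,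
      Linear.comp_smul, Category.comp_id]

variable {Y : C} {n : ℕ}

lemma cyclesToAbelianExt_apply (z : (P.complex.linearYonedaObj R Y).cycles n) :
    cyclesToAbelianExt R P Y n z =
      P.extMk (cyclesToHom R P.complex Y n z) (n + 1) rfl (d_comp_cyclesToHom _ z) := rfl

lemma cyclesToAbelianExt_surjective :
    Function.Surjective (cyclesToAbelianExt.{t, w} R P Y n) := fun x ↦ by
  obtain ⟨f, hf, rfl⟩ := P.extMk_surjective x (n + 1) rfl
  obtain ⟨z, rfl⟩ := exists_cyclesToHom_eq (R := R) P.complex hf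
  exact ⟨z, rfl⟩

lemma mk₀_comp_cyclesToAbelianExt {P' : ProjectiveResolution X'} {f : X ⟶ X'}
    (φ : ProjectiveResolution.Hom P P' f) (z : (P'.complex.linearYonedaObj R Y).cycles n)
    (z' : (P.complex.linearYonedaObj R Y).cycles n)
    (h : cyclesToHom R P.complex Y n z' = φ.hom.f n ≫ cyclesToHom R P'.complex Y n z) :
    (Abelian.Ext.mk₀ f).comp (cyclesToAbelianExt R P' Y n z) (zero_add n) =
      cyclesToAbelianExt R P Y n z' := by
  simp only [cyclesToAbelianExt_apply, h, P'.mk₀_comp_extMk _ _ _ _ φ]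

end

section

variable [EnoughProjectives C] {X X' : C} (P : ProjectiveResolution X)

variable (R) in
/-- The class of a cocycle of `Hom(P, Y)` in the derived functor `Ext`. -/
noncomputable def cyclesToExt (Y : C) (n : ℕ) :
    (P.complex.linearYonedaObj R Y).cycles n →ₗ[R] ((Ext R C n).obj (op X)).obj Y :=
  ((P.complex.linearYonedaObj R Y).homologyπ n ≫ (P.isoExt n Y).inv).hom

lemma cyclesToExt_surjective (Y : C) (n : ℕ) : Function.Surjective (cyclesToExt R P Y n) :=
  (ModuleCat.epi_iff_surjective _).1 inferInstance

lemma cyclesToExt_eq_zero_iff {Y : C} {n : ℕ} (z : (P.complex.linearYonedaObj R Y).cycles n) :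
    cyclesToExt R P Y n z = 0 ↔ (P.complex.linearYonedaObj R Y).homologyπ n z = 0 :=
  (P.isoExt n Y).toLinearEquiv.symm.map_eq_zero_iff

lemma isoExt_inv_naturality {P' : ProjectiveResolution X'} {f : X ⟶ X'}
    (φ : ProjectiveResolution.Hom P P' f) (Y : C) (n : ℕ) :
    (P'.isoExt n Y).inv ≫ ((Ext R C n).map f.op).app Y =
      homologyMap (linearYonedaMap R φ.hom Y) n ≫ (P.isoExt n Y).inv := by
  let F := ((linearYoneda R C).obj Y).rightOp
  let K := (F.mapHomologicalComplex _).obj P.complex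
  let K' := (F.mapHomologicalComplex _).obj P'.complex
  have leftDerived_naturality := congr($(ProjectiveResolution.isoLeftDerivedObj_hom_naturality
    f P P' φ.hom (by simpa using φ.hom_f_zero_comp_π_f_zero) F n).unop)
  have homology_naturality :=
    congr($(homologyOp_hom_naturality (linearYonedaMap R φ.hom Y) n).unop)
  have key : (K'.homologyUnop n).hom ≫ (P'.isoLeftDerivedObj F n).hom.unop ≫
      ((F.leftDerived n).map f).unop =
        homologyMap ((unopFunctor _ _).map ((F.mapHomologicalComplex _).map φ.hom).op) n ≫
          (K.homologyUnop n).hom ≫ (P.isoLeftDerivedObj F n).hom.unop :=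
    congr(_ ≫ $leftDerived_naturality).trans
      ((Category.assoc _ _ _).symm.trans (congr($homology_naturality ≫ _).trans
        (Category.assoc _ _ _)))
  exact (Category.assoc _ _ _).trans key

lemma ext_map_cyclesToExt {P' : ProjectiveResolution X'} {f : X ⟶ X'}
    (φ : ProjectiveResolution.Hom P P' f) {Y : C} {n : ℕ}
    (z : (P'.complex.linearYonedaObj R Y).cycles n) :
    ((Ext R C n).map f.op).app Y (cyclesToExt R P' Y n z) =
      cyclesToExt R P Y n (cyclesMap (linearYonedaMap R φ.hom Y) n z) :=
  congr($(isoExt_inv_naturality P φ Y n) ((P'.complex.linearYonedaObj R Y).homologyπ n z)).trans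
    congr((P.isoExt n Y).inv $(congr($(homologyπ_naturality (linearYonedaMap R φ.hom Y) n) z)))

end

section

variable [EnoughProjectives C] [HasExt.{w} C] {X X' : C}

lemma ker_cyclesToAbelianExt (P : ProjectiveResolution X) (Y : C) (n : ℕ) :
    LinearMap.ker (cyclesToAbelianExt.{t, w} R P Y n) = LinearMap.ker (cyclesToExt R P Y n) := by
  ext z
  rw [LinearMap.mem_ker, LinearMap.mem_ker, cyclesToExt_eq_zero_iff,
    homologyπ_eq_zero_iff_cyclesToHom, cyclesToAbelianExt_apply, extMk_eq_zero_iff_exists_prev]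

variable (R) in
/-- The comparison of the `Ext` groups defined through the derived category with the left derived
functors of `Hom(-, Y)`. -/
noncomputable def abelianExtEquivExt (X Y : C) (n : ℕ) :
    Abelian.Ext.{w} X Y n ≃ₗ[R] ((Ext R C n).obj (op X)).obj Y :=
  linearEquivOfKerEq _ _ (cyclesToAbelianExt_surjective (projectiveResolution X))
    (cyclesToExt_surjective _ Y n) (ker_cyclesToAbelianExt _ Y n)

lemma abelianExtEquivExt_naturality (f : X ⟶ X') {Y : C} {n : ℕ} (x : Abelian.Ext.{w} X' Y n) :
    abelianExtEquivExt R X Y n ((Abelian.Ext.mk₀ f).comp x (zero_add n)) =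
      ((Ext R C n).map f.op).app Y (abelianExtEquivExt R X' Y n x) := by
  obtain ⟨z, rfl⟩ := cyclesToAbelianExt_surjective (R := R) (projectiveResolution X') x
  let φ : ProjectiveResolution.Hom (projectiveResolution X) (projectiveResolution X') f :=
    ⟨ProjectiveResolution.lift f _ _, by simpa using ProjectiveResolution.lift_commutes_zero f _ _⟩
  rw [mk₀_comp_cyclesToAbelianExt _ φ z _ (cyclesToHom_cyclesMap φ.hom z), abelianExtEquivExt,
    abelianExtEquivExt, linearEquivOfKerEq_apply, linearEquivOfKerEq_apply, ext_map_cyclesToExt]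

end

end ExtComparison

section DirectLimit

variable {R ι P : Type*} [Ring R] [Preorder ι] [IsDirectedOrder ι] [Nonempty ι] [DecidableEq ι]
  {G G' : ι → Type*} [∀ i, AddCommGroup (G i)] [∀ i, Module R (G i)]
  [∀ i, AddCommGroup (G' i)] [∀ i, Module R (G' i)] [AddCommGroup P] [Module R P]
  {f : ∀ i j, i ≤ j → G i →ₗ[R] G j} {f' : ∀ i j, i ≤ j → G' i →ₗ[R] G' j}

lemma directLimit_lift_bijective (g : ∀ i, G i →ₗ[R] P)
    (hg : ∀ i j hij x, g j (f i j hij x) = g i x)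
    (inj : ∀ i x, g i x = 0 → ∃ j hij, f i j hij x = 0) (surj : ∀ y, ∃ i x, g i x = y) :
    Function.Bijective (Module.DirectLimit.lift R ι G f g hg) := by
  refine ⟨(injective_iff_map_eq_zero _).2 fun z hz ↦ ?_, fun y ↦ ?_⟩
  · obtain ⟨i, x, rfl⟩ := Module.DirectLimit.exists_of z
    rw [Module.DirectLimit.lift_of] at hz
    obtain ⟨j, hij, hx⟩ := inj i x hz
    rw [← Module.DirectLimit.of_f (hij := hij), hx, map_zero]
  · obtain ⟨i, x, rfl⟩ := surj y
    exact ⟨_, Module.DirectLimit.lift_of g hg x⟩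

lemma directLimit_map_bijective [DirectedSystem G (f · · ·)] [DirectedSystem G' (f' · · ·)]
    (g : ∀ i, G i →ₗ[R] G' i) (hg : ∀ i j hij, g j ∘ₗ f i j hij = f' i j hij ∘ₗ g i)
    (inj : ∀ i x, g i x = 0 → ∃ j hij, f i j hij x = 0)
    (surj : ∀ i y, ∃ j hij x, g j x = f' i j hij y) :
    Function.Bijective (Module.DirectLimit.map g hg) := by
  refine directLimit_lift_bijective _ _ (fun i x hx ↦ ?_) fun z ↦ ?_
  · obtain ⟨j, hij, hj⟩ := Module.DirectLimit.of.zero_exact hx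
    rw [← LinearMap.comp_apply, ← hg] at hj
    obtain ⟨k, hjk, hk⟩ := inj j _ hj
    exact ⟨k, hij.trans hjk, by rw [← hk, DirectedSystem.map_map' f]⟩
  · obtain ⟨i, y, rfl⟩ := Module.DirectLimit.exists_of z
    obtain ⟨j, hij, x, hx⟩ := surj i y
    exact ⟨j, x, by rw [LinearMap.comp_apply, hx, Module.DirectLimit.of_f]⟩

end DirectLimit

section ExtPowLimit

variable {R : Type u} [CommRing R] (𝔞 : Ideal R)

/-- The module `R ⧸ 𝔞 ^ k`. -/
abbrev powQuot (k : ℕ) : ModuleCat.{u} R := ModuleCat.of R (R ⧸ 𝔞 ^ k)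

/-- The projection `R ⧸ 𝔞 ^ l ⟶ R ⧸ 𝔞 ^ k` for `k ≤ l`. -/
def powQuotMap {k l : ℕ} (h : k ≤ l) : powQuot 𝔞 l ⟶ powQuot 𝔞 k :=
  ModuleCat.ofHom (Submodule.mapQ _ _ LinearMap.id (Ideal.pow_le_pow_right h))

lemma powQuotMap_refl (k : ℕ) : powQuotMap 𝔞 (le_refl k) = 𝟙 _ := by
  ext
  rfl

lemma powQuotMap_comp {k l m : ℕ} (h : k ≤ l) (h' : l ≤ m) :
    powQuotMap 𝔞 h' ≫ powQuotMap 𝔞 h = powQuotMap 𝔞 (h.trans h') := by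
  ext
  rfl

/-- The transition map `Ext^i(R ⧸ 𝔞 ^ k, M) → Ext^i(R ⧸ 𝔞 ^ l, M)` for `k ≤ l`. -/
noncomputable def extPowMap (M : ModuleCat.{u} R) (i : ℕ) {k l : ℕ} (h : k ≤ l) :
    Abelian.Ext.{u} (powQuot 𝔞 k) M i →ₗ[R] Abelian.Ext.{u} (powQuot 𝔞 l) M i :=
  Abelian.Ext.precompOfLinear (Abelian.Ext.mk₀ (powQuotMap 𝔞 h)) R M (zero_add i)

variable {M M' : ModuleCat.{u} R} {i j k l n : ℕ}

lemma extPowMap_apply (h : k ≤ l) (x : Abelian.Ext.{u} (powQuot 𝔞 k) M i) :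
    extPowMap 𝔞 M i h x = (Abelian.Ext.mk₀ (powQuotMap 𝔞 h)).comp x (zero_add i) := rfl

lemma extPowMap_refl (x : Abelian.Ext.{u} (powQuot 𝔞 k) M i) :
    extPowMap 𝔞 M i (le_refl k) x = x := by
  rw [extPowMap_apply, powQuotMap_refl, Abelian.Ext.mk₀_id_comp]

lemma extPowMap_comp (h : k ≤ l) (x : Abelian.Ext.{u} (powQuot 𝔞 k) M i)
    (α : Abelian.Ext.{u} M M' j) (hn : i + j = n) :
    extPowMap 𝔞 M' n h (x.comp α hn) = (extPowMap 𝔞 M i h x).comp α hn := by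
  simp only [extPowMap_apply]
  rw [Abelian.Ext.comp_assoc _ _ _ (zero_add i) hn (by lia)]

instance (M : ModuleCat.{u} R) (i : ℕ) :
    DirectedSystem (fun k ↦ Abelian.Ext.{u} (powQuot 𝔞 k) M i)
      (fun _ _ h ↦ extPowMap 𝔞 M i h) where
  map_self _ := extPowMap_refl 𝔞
  map_map _ _ _ h h' x := by
    simp only [extPowMap_apply, ← powQuotMap_comp 𝔞 h h', ← Abelian.Ext.mk₀_comp_mk₀_assoc]

/-- The direct limit of the modules `Ext^i(R ⧸ 𝔞 ^ k, M)`, that is, the local cohomology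
`H^i_𝔞(M)` computed with `Abelian.Ext`, whose long exact sequences are available. -/
noncomputable abbrev extPowLimit (M : ModuleCat.{u} R) (i : ℕ) : Type u :=
  Module.DirectLimit (fun k ↦ Abelian.Ext.{u} (powQuot 𝔞 k) M i) fun _ _ h ↦ extPowMap 𝔞 M i h

/-- The map `H^i_𝔞(M) → H^{i+j}_𝔞(M')` induced by a class in `Ext^j(M, M')`. -/
noncomputable def extPowLimitMap (α : Abelian.Ext.{u} M M' j) (hn : i + j = n) :
    extPowLimit 𝔞 M i →ₗ[R] extPowLimit 𝔞 M' n :=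
  Module.DirectLimit.map (fun k ↦ α.postcompOfLinear R (powQuot 𝔞 k) hn) fun _ _ h ↦ by
    ext x
    exact (extPowMap_comp 𝔞 h x α hn).symm

/-- The diagram `k ↦ Ext^i(R ⧸ 𝔞 ^ k, -)` whose colimit is the `i`-th local cohomology functor. -/
noncomputable abbrev localCohomologyDiagram (i : ℕ) : ℕᵒᵖᵒᵖ ⥤ ModuleCat.{u} R ⥤ ModuleCat.{u} R :=
  localCohomology.diagram (localCohomology.idealPowersDiagram 𝔞) i

/-- The map from the `k`-th term of the colimit defining `localCohomology`. -/
noncomputable def extToLocalCohomology (M : ModuleCat.{u} R) (i k : ℕ) :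
    Abelian.Ext.{u} (powQuot 𝔞 k) M i →ₗ[R] (localCohomology 𝔞 i).obj M :=
  ((Limits.colimit.ι (localCohomologyDiagram 𝔞 i) (.op (.op k))).app M).hom ∘ₗ
    (abelianExtEquivExt R (powQuot 𝔞 k) M i).toLinearMap

lemma abelianExtEquivExt_extPowMap (h : k ≤ l) (x : Abelian.Ext.{u} (powQuot 𝔞 k) M i) :
    abelianExtEquivExt R _ M i (extPowMap 𝔞 M i h x) =
      ((localCohomologyDiagram 𝔞 i).map (homOfLE h).op.op).app M (abelianExtEquivExt R _ M i x) :=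
  abelianExtEquivExt_naturality (powQuotMap 𝔞 h) x

lemma extToLocalCohomology_extPowMap (h : k ≤ l) (x : Abelian.Ext.{u} (powQuot 𝔞 k) M i) :
    extToLocalCohomology 𝔞 M i l (extPowMap 𝔞 M i h x) = extToLocalCohomology 𝔞 M i k x :=
  congr((Limits.colimit.ι (localCohomologyDiagram 𝔞 i) (.op (.op l))).app M
    $(abelianExtEquivExt_extPowMap 𝔞 h x)).trans
      congr(($(Limits.colimit.w (localCohomologyDiagram 𝔞 i) (homOfLE h).op.op)).app M
        (abelianExtEquivExt R _ M i x))

variable (M i) in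
/-- The local cohomology functor evaluated at `M` is a colimit of modules. -/
noncomputable def isColimitLocalCohomology :
    Limits.IsColimit (((evaluation _ (ModuleCat.{u} R)).obj M).mapCocone
      (Limits.colimit.cocone (localCohomologyDiagram 𝔞 i))) :=
  Limits.isColimitOfPreserves _ (Limits.colimit.isColimit _)

instance preservesFilteredColimitsOfSize_forget_moduleCat :
    Limits.PreservesFilteredColimitsOfSize.{0, 0} (forget (ModuleCat.{u} R)) :=
  Limits.preservesFilteredColimitsOfSize_shrink.{0, u, 0, u} _

lemma exists_extToLocalCohomology_eq (y : (localCohomology 𝔞 i).obj M) :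
    ∃ k x, extToLocalCohomology 𝔞 M i k x = y := by
  obtain ⟨k, x, hx⟩ :=
    Limits.Concrete.isColimit_exists_rep _ (isColimitLocalCohomology 𝔞 M i) y
  refine ⟨k.unop.unop, (abelianExtEquivExt R _ M i).symm x, Eq.trans ?_ hx⟩
  exact congr((Limits.colimit.ι (localCohomologyDiagram 𝔞 i) k).app M
    $((abelianExtEquivExt R _ M i).apply_symm_apply x))

lemma exists_extPowMap_eq_zero_of_extToLocalCohomology_eq_zero
    {x : Abelian.Ext.{u} (powQuot 𝔞 k) M i} (hx : extToLocalCohomology 𝔞 M i k x = 0) :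
    ∃ l, ∃ h : k ≤ l, extPowMap 𝔞 M i h x = 0 := by
  obtain ⟨l, f, hf⟩ := ((isColimitLocalCohomology 𝔞 M i).eq_iff' _ _).1
    (hx.trans (map_zero ((Limits.colimit.ι (localCohomologyDiagram 𝔞 i) _).app M).hom).symm)
  refine ⟨l.unop.unop, leOfHom f.unop.unop, (abelianExtEquivExt R _ M i).injective ?_⟩
  rw [abelianExtEquivExt_extPowMap, map_zero]
  exact hf.trans (map_zero _)

variable (M i) in
/-- The comparison of the two descriptions of local cohomology. -/
noncomputable def extPowLimitEquivLocalCohomology :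
    extPowLimit 𝔞 M i ≃ₗ[R] (localCohomology 𝔞 i).obj M :=
  .ofBijective _ (directLimit_lift_bijective (extToLocalCohomology 𝔞 M i)
    (fun _ _ h ↦ extToLocalCohomology_extPowMap 𝔞 h)
    (fun _ _ ↦ exists_extPowMap_eq_zero_of_extToLocalCohomology_eq_zero 𝔞)
    (exists_extToLocalCohomology_eq 𝔞))

end ExtPowLimit

section PrimaryComponent

section

variable {R M M' : Type*} [CommRing R] {𝔞 : Ideal R} [AddCommGroup M] [Module R M]
  [AddCommGroup M'] [Module R M']

lemma mem_primaryComponent_iff {x : M} :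
    x ∈ 𝔞.primaryComponent M ↔ ∃ n : ℕ, ∀ a ∈ 𝔞 ^ n, a • x = 0 := by
  simp [Ideal.primaryComponent_mem]

lemma map_mem_primaryComponent_iff {f : M →ₗ[R] M'} (hf : Function.Injective f) {x : M} :
    f x ∈ 𝔞.primaryComponent M' ↔ x ∈ 𝔞.primaryComponent M := by
  simp only [mem_primaryComponent_iff, ← map_smul, map_eq_zero_iff f hf]

lemma exists_forall_mem_pow_smul_eq_zero_of_fg {P : Submodule R M} (hP : P.FG)
    (h : P ≤ 𝔞.primaryComponent M) :
    ∃ n : ℕ, ∀ a ∈ 𝔞 ^ n, ∀ x ∈ P, a • x = 0 := by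
  have directed : Directed (· ≤ ·) fun n : ℕ ↦ Submodule.torsionBySet R M (𝔞 ^ n : Ideal R) :=
    Monotone.directed_le fun i j hij ↦ Submodule.torsionBySet_le_torsionBySet_pow i j hij 𝔞
  obtain ⟨_, ⟨n, rfl⟩, hn⟩ := (Submodule.fg_iff_compact P).1 hP _ _ (Set.range_nonempty _)
    directed.directedOn_range isLUB_iSup h
  exact ⟨n, fun a ha x hx ↦ (Submodule.mem_torsionBySet_iff _ _).1 (hn hx) ⟨a, ha⟩⟩

lemma primaryComponent_quotient_primaryComponent (h𝔞 : 𝔞.FG) :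
    𝔞.primaryComponent (M ⧸ 𝔞.primaryComponent M) = ⊥ := by
  refine eq_bot_iff.2 fun x hx ↦ ?_
  obtain ⟨x, rfl⟩ := Submodule.mkQ_surjective _ x
  obtain ⟨n, hn⟩ := mem_primaryComponent_iff.1 hx
  have map_pow_le :
      Submodule.map (LinearMap.toSpanSingleton R M x) (𝔞 ^ n) ≤ 𝔞.primaryComponent M := by
    rintro _ ⟨a, ha, rfl⟩
    exact (Submodule.Quotient.mk_eq_zero _).1 (hn a ha)
  obtain ⟨k, hk⟩ := exists_forall_mem_pow_smul_eq_zero_of_fg (Submodule.FG.map _ h𝔞.pow) map_pow_le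
  refine (Submodule.Quotient.mk_eq_zero _).2 (mem_primaryComponent_iff.2 ⟨k + n, fun c hc ↦ ?_⟩)
  rw [pow_add] at hc
  refine Submodule.mul_le (P := LinearMap.ker (LinearMap.toSpanSingleton R M x)).2
    (fun a ha b hb ↦ ?_) hc
  exact (mul_smul a b x).trans (hk a ha _ ⟨b, hb, rfl⟩)

end

variable {R : Type u} [CommRing R] {𝔞 : Ideal R} {M M' : Type u} [AddCommGroup M] [Module R M]
  [AddCommGroup M'] [Module R M']

lemma isTorsionIdeal_iff : IsTorsionIdeal 𝔞 M ↔ 𝔞.primaryComponent M = ⊤ := by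
  simp only [IsTorsionIdeal, Submodule.eq_top_iff', mem_primaryComponent_iff]

lemma isTorsionIdeal_primaryComponent : IsTorsionIdeal 𝔞 (𝔞.primaryComponent M) := fun x ↦ by
  obtain ⟨n, hn⟩ := mem_primaryComponent_iff.1 x.2
  exact ⟨n, fun a ha ↦ Subtype.ext (hn a ha)⟩

lemma IsTorsionIdeal.map_mem_primaryComponent (h : IsTorsionIdeal 𝔞 M) (f : M →ₗ[R] M') (x : M) :
    f x ∈ 𝔞.primaryComponent M' :=
  Ideal.primaryComponent_map_mem 𝔞 f ⟨x, mem_primaryComponent_iff.2 (h x)⟩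

lemma IsTorsionIdeal.of_surjective (h : IsTorsionIdeal 𝔞 M) {f : M →ₗ[R] M'}
    (hf : Function.Surjective f) : IsTorsionIdeal 𝔞 M' := fun y ↦ by
  obtain ⟨x, rfl⟩ := hf y
  exact mem_primaryComponent_iff.1 (h.map_mem_primaryComponent f x)

lemma isTorsionIdeal_quotient_pow (k : ℕ) : IsTorsionIdeal 𝔞 (R ⧸ 𝔞 ^ k) := fun x ↦ by
  obtain ⟨r, rfl⟩ := Ideal.Quotient.mk_surjective x
  exact ⟨k, fun a ha ↦ Ideal.Quotient.eq_zero_iff_mem.2 (Ideal.mul_mem_right r _ ha)⟩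

-- By Artin–Rees, `J ⊓ 𝔞 ^ (k + n) ≤ 𝔞 ^ n • J`, and `𝔞 ^ n` kills the range of `g`.
lemma IsTorsionIdeal.exists_comap_pow_le_ker [IsNoetherianRing R] (h : IsTorsionIdeal 𝔞 M)
    {J : Ideal R} (g : J →ₗ[R] M) :
    ∃ m : ℕ, Submodule.comap J.subtype (𝔞 ^ m) ≤ LinearMap.ker g := by
  obtain ⟨n, hn⟩ := exists_forall_mem_pow_smul_eq_zero_of_fg (Module.Finite.fg_top.map g)
    (le_top.trans_eq (isTorsionIdeal_iff.1 h).symm)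
  obtain ⟨k, hk⟩ := 𝔞.exists_pow_inf_eq_pow_smul J
  have smul_top_le_ker : 𝔞 ^ n • (⊤ : Submodule R J) ≤ LinearMap.ker g :=
    Submodule.smul_le.2 fun a ha x hx ↦ (g.map_smul a x).trans (hn a ha _ ⟨x, hx, rfl⟩)
  have inf_le : 𝔞 ^ (k + n) ⊓ J ≤ (𝔞 ^ n • (⊤ : Submodule R J)).map J.subtype := by
    have := hk (k + n) (Nat.le_add_right k n)
    rw [smul_eq_mul, Ideal.mul_top, Nat.add_sub_cancel_left] at this
    rw [this, Submodule.map_smul'', Submodule.map_top, Submodule.range_subtype]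
    exact smul_mono_right _ inf_le_right
  refine ⟨k + n, fun x hx ↦ smul_top_le_ker ?_⟩
  obtain ⟨y, hy, hyx⟩ := inf_le ⟨hx, x.2⟩
  rwa [← Subtype.ext hyx]

instance injective_primaryComponent [IsNoetherianRing R] [Module.Injective R M] :
    Module.Injective R (𝔞.primaryComponent M) := by
  refine Module.Baer.injective fun J g ↦ ?_
  obtain ⟨m, hm⟩ := isTorsionIdeal_primaryComponent.exists_comap_pow_le_ker g
  let ι : (J ⧸ Submodule.comap J.subtype (𝔞 ^ m)) →ₗ[R] R ⧸ 𝔞 ^ m :=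
    Submodule.mapQ _ _ J.subtype le_rfl
  have hι : Function.Injective ι :=
    LinearMap.ker_eq_bot.1 (Submodule.ker_liftQ_eq_bot _ _ _ (by
      rw [LinearMap.ker_comp, Submodule.ker_mkQ]))
  obtain ⟨g', hg'⟩ := Module.Injective.out ι hι
    ((𝔞.primaryComponent M).subtype ∘ₗ Submodule.liftQ _ g hm)
  exact ⟨(g' ∘ₗ Submodule.mkQ _).codRestrict _ fun r ↦
      (isTorsionIdeal_quotient_pow m).map_mem_primaryComponent g' _,
    fun x hx ↦ Subtype.ext (hg' (Submodule.Quotient.mk ⟨x, hx⟩))⟩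

end PrimaryComponent

section LongExactSequence

lemma shortExact_cokernel {C : Type*} [Category* C] [Abelian C] {X Y : C} (f : X ⟶ Y) [Mono f] :
    (ShortComplex.mk f (Limits.cokernel.π f) (Limits.cokernel.condition f)).ShortExact where
  exact := ShortComplex.exact_cokernel f

universe w v u'

variable {C : Type u'} [Category.{v} C] [Abelian C] [HasExt.{w} C] (X : C)

/-- The isomorphism `Ext^n(X, Y) ≃ Ext^n(X, Y')` induced by an isomorphism `Y ≅ Y'`. -/
noncomputable def extPostcompEquiv (R : Type*) [CommRing R] [Linear R C] {Y Y' : C} (e : Y ≅ Y')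
    (n : ℕ) : Abelian.Ext.{w} X Y n ≃ₗ[R] Abelian.Ext.{w} X Y' n :=
  .ofLinearMap ((Abelian.Ext.mk₀ e.hom).postcompOfLinear R X (add_zero n))
    ((Abelian.Ext.mk₀ e.inv).postcompOfLinear R X (add_zero n)) (by ext; simp) (by ext; simp)

variable {X} {S : ShortComplex C} {n n' : ℕ}

lemma subsingleton_ext_of_mono {Y Y' : C} (f : Y ⟶ Y') [Mono f]
    [Subsingleton (Abelian.Ext.{w} X Y' 0)] : Subsingleton (Abelian.Ext.{w} X Y 0) :=
  (Abelian.Ext.postcomp_mk₀_injective_of_mono X f).subsingleton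

lemma subsingleton_ext_of_shortExact (hS : S.ShortExact)
    (h₁ : Subsingleton (Abelian.Ext.{w} X S.X₁ n))
    (h₃ : Subsingleton (Abelian.Ext.{w} X S.X₃ n)) : Subsingleton (Abelian.Ext.{w} X S.X₂ n) :=
  subsingleton_of_forall_eq 0 fun x ↦ by
    obtain ⟨y, rfl⟩ := Abelian.Ext.covariant_sequence_exact₂ X hS x (Subsingleton.elim _ _)
    rw [Subsingleton.elim y 0, Abelian.Ext.zero_comp]

lemma ext_postcomp_f_bijective (hS : S.ShortExact)
    (h : Subsingleton (Abelian.Ext.{w} X S.X₃ n))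
    (h' : ∀ m, m + 1 = n → Subsingleton (Abelian.Ext.{w} X S.X₃ m)) :
    Function.Bijective ((Abelian.Ext.mk₀ S.f).postcomp X (add_zero n)) := by
  refine ⟨?_, fun y ↦ Abelian.Ext.covariant_sequence_exact₂ X hS y (Subsingleton.elim _ _)⟩
  obtain - | m := n
  · have := hS.mono_f
    exact Abelian.Ext.postcomp_mk₀_injective_of_mono X S.f
  · refine (injective_iff_map_eq_zero _).2 fun x hx ↦ ?_
    obtain ⟨y, rfl⟩ := Abelian.Ext.covariant_sequence_exact₁ X hS x hx rfl
    have := h' m rfl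
    rw [Subsingleton.elim y 0, Abelian.Ext.zero_comp]

lemma ext_postcomp_g_bijective (hS : S.ShortExact)
    (h : Subsingleton (Abelian.Ext.{w} X S.X₁ n))
    (h' : Subsingleton (Abelian.Ext.{w} X S.X₁ (n + 1))) :
    Function.Bijective ((Abelian.Ext.mk₀ S.g).postcomp X (add_zero n)) := by
  refine ⟨(injective_iff_map_eq_zero _).2 fun x hx ↦ ?_, fun y ↦
    Abelian.Ext.covariant_sequence_exact₃ X hS y rfl (Subsingleton.elim _ _)⟩
  obtain ⟨y, rfl⟩ := Abelian.Ext.covariant_sequence_exact₂ X hS x hx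
  rw [Subsingleton.elim y 0, Abelian.Ext.zero_comp]

lemma ext_postcomp_extClass_bijective (hS : S.ShortExact) (hn : n + 1 = n')
    (h : Subsingleton (Abelian.Ext.{w} X S.X₂ n))
    (h' : Subsingleton (Abelian.Ext.{w} X S.X₂ n')) :
    Function.Bijective (hS.extClass.postcomp X hn) := by
  refine ⟨(injective_iff_map_eq_zero _).2 fun x hx ↦ ?_, fun y ↦
    Abelian.Ext.covariant_sequence_exact₁ X hS y (Subsingleton.elim _ _) hn⟩
  obtain ⟨y, rfl⟩ := Abelian.Ext.covariant_sequence_exact₃ X hS x hn hx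
  rw [Subsingleton.elim y 0, Abelian.Ext.zero_comp]

end LongExactSequence

section Torsion

variable {R : Type u} [CommRing R] (𝔞 : Ideal R) (M : ModuleCat.{u} R)

/-- The short exact sequence `0 → Γ M → M → M ⧸ Γ M → 0`, where `Γ M` is the `𝔞`-torsion submodule
`𝔞.primaryComponent M`. -/
noncomputable abbrev primaryComponentShortComplex : ShortComplex (ModuleCat.{u} R) :=
  ModuleCat.shortComplexOfCompEqZero (𝔞.primaryComponent M).subtype (𝔞.primaryComponent M).mkQ
    (LinearMap.exact_subtype_mkQ _).linearMap_comp_eq_zero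

lemma primaryComponentShortComplex_shortExact : (primaryComponentShortComplex 𝔞 M).ShortExact :=
  ModuleCat.shortComplex_shortExact _ (LinearMap.exact_subtype_mkQ _)
    (Submodule.subtype_injective _) (Submodule.mkQ_surjective _)

instance injective_quotient_primaryComponent [IsNoetherianRing R] [Injective M] :
    Injective (ModuleCat.of R (M ⧸ 𝔞.primaryComponent M)) := by
  have : Module.Injective R M := Module.injective_module_of_injective_object R M
  have : Injective (primaryComponentShortComplex 𝔞 M).X₁ :=
    Module.injective_object_of_injective_module R (𝔞.primaryComponent M)
  let σ := (primaryComponentShortComplex_shortExact 𝔞 M).splittingOfInjective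
  exact Retract.injective (Y := M) ⟨σ.s, (primaryComponentShortComplex 𝔞 M).g, σ.s_g⟩

variable {𝔞}

lemma IsTorsionIdeal.exists_mono_injective [IsNoetherianRing R] {T : ModuleCat.{u} R}
    (hT : IsTorsionIdeal 𝔞 T) :
    ∃ (J : ModuleCat.{u} R) (f : T ⟶ J), Mono f ∧ Injective J ∧ IsTorsionIdeal 𝔞 J := by
  let E := Injective.under T
  have : Injective (ModuleCat.of R E) := inferInstanceAs (Injective E)
  have : Module.Injective R E := Module.injective_module_of_injective_object R E
  let f : T →ₗ[R] 𝔞.primaryComponent E :=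
    (Injective.ι T).hom.codRestrict _ (hT.map_mem_primaryComponent _)
  have hf : Function.Injective f := fun x y h ↦
    (ModuleCat.mono_iff_injective (Injective.ι T)).1 inferInstance congr($h)
  exact ⟨.of R (𝔞.primaryComponent E), ModuleCat.ofHom f, (ModuleCat.mono_iff_injective _).2 hf,
    Module.injective_object_of_injective_module R (𝔞.primaryComponent E),
    isTorsionIdeal_primaryComponent⟩

lemma IsTorsionIdeal.cokernel {M M' : ModuleCat.{u} R} (h : IsTorsionIdeal 𝔞 M') (f : M ⟶ M') :
    IsTorsionIdeal 𝔞 (Limits.cokernel f : ModuleCat.{u} R) :=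
  h.of_surjective ((ModuleCat.epi_iff_surjective (Limits.cokernel.π f)).1 inferInstance)

variable {M}

lemma IsTorsionIdeal.subsingleton_ext {N : ModuleCat.{u} R} (hN : IsTorsionIdeal 𝔞 N)
    [Injective M] (hM : 𝔞.primaryComponent M = ⊥) (n : ℕ) :
    Subsingleton (Abelian.Ext.{u} N M n) := by
  refine subsingleton_of_forall_eq 0 fun x ↦ ?_
  obtain - | n := n
  · obtain ⟨f, rfl⟩ := (Abelian.Ext.mk₀_bijective N M).2 x
    rw [Abelian.Ext.mk₀_eq_zero_iff]
    ext y
    have := hN.map_mem_primaryComponent f.hom y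
    rwa [hM] at this
  · exact Abelian.Ext.eq_zero_of_injective x

lemma IsTorsionIdeal.exists_comp_eq_powQuotMap_comp {J T : ModuleCat.{u} R}
    (hJ : IsTorsionIdeal 𝔞 J) (g : J ⟶ T) [Epi g] {k : ℕ} (p : powQuot 𝔞 k ⟶ T) :
    ∃ l, ∃ (h : k ≤ l) (q : powQuot 𝔞 l ⟶ J), q ≫ g = powQuotMap 𝔞 h ≫ p := by
  obtain ⟨b, hb⟩ := (ModuleCat.epi_iff_surjective g).1 inferInstance (p.hom 1)
  obtain ⟨l, hl⟩ := hJ b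
  refine ⟨max k l, le_max_left k l, ModuleCat.ofHom (Submodule.liftQ _
    (LinearMap.toSpanSingleton R J b) fun a ha ↦
      hl a (Ideal.pow_le_pow_right (le_max_right k l) ha)), ?_⟩
  ext
  exact (congrArg g.hom (one_smul R b)).trans hb

/-- Embed `T` in an injective torsion module to shift degrees: in degree one a cocycle is the
obstruction to lifting a map out of `R ⧸ 𝔞 ^ k`, which vanishes for a larger power of `𝔞`. -/
lemma IsTorsionIdeal.exists_extPowMap_eq_zero [IsNoetherianRing R] {T : ModuleCat.{u} R}
    (hT : IsTorsionIdeal 𝔞 T) {j k : ℕ} (x : Abelian.Ext.{u} (powQuot 𝔞 k) T (j + 1)) :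
    ∃ l, ∃ h : k ≤ l, extPowMap 𝔞 T (j + 1) h x = 0 := by
  induction j generalizing T with
  | zero =>
    obtain ⟨J, f, _, _, hJ⟩ := hT.exists_mono_injective
    have hS := shortExact_cokernel f
    obtain ⟨y, rfl⟩ := Abelian.Ext.covariant_sequence_exact₁ _ hS x
      (Abelian.Ext.eq_zero_of_injective _) rfl
    obtain ⟨p, rfl⟩ := (Abelian.Ext.mk₀_bijective _ _).2 y
    obtain ⟨l, h, q, hq⟩ := hJ.exists_comp_eq_powQuotMap_comp (Limits.cokernel.π f) p
    refine ⟨l, h, ?_⟩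
    rw [extPowMap_comp, extPowMap_apply, Abelian.Ext.mk₀_comp_mk₀, ← hq,
      ← Abelian.Ext.mk₀_comp_mk₀, Abelian.Ext.comp_assoc_of_second_deg_zero, hS.comp_extClass,
      Abelian.Ext.comp_zero]
  | succ j ih =>
    obtain ⟨J, f, _, _, hJ⟩ := hT.exists_mono_injective
    obtain ⟨y, rfl⟩ := Abelian.Ext.covariant_sequence_exact₁ _ (shortExact_cokernel f) x
      (Abelian.Ext.eq_zero_of_injective _) rfl
    obtain ⟨l, h, hl⟩ := ih (hJ.cokernel f) y
    exact ⟨l, h, by rw [extPowMap_comp, hl, Abelian.Ext.zero_comp]⟩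

end Torsion

section DegreeZero

variable {R : Type u} [CommRing R] (𝔞 : Ideal R) (M : ModuleCat.{u} R)

/-- Evaluation at `1` of the maps `R ⧸ 𝔞 ^ k → M`, whose values are `𝔞`-torsion. -/
noncomputable def extPowEvalOne (k : ℕ) :
    Abelian.Ext.{u} (powQuot 𝔞 k) M 0 →ₗ[R] 𝔞.primaryComponent M :=
  (LinearMap.applyₗ (1 : R ⧸ 𝔞 ^ k) ∘ₗ ModuleCat.homLinearEquiv.toLinearMap ∘ₗ
    (Abelian.Ext.linearEquiv₀ (R := R)).toLinearMap).codRestrict _ fun x ↦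
      (isTorsionIdeal_quotient_pow k).map_mem_primaryComponent
        (Abelian.Ext.linearEquiv₀ (R := R) x).hom 1

variable {M}

lemma coe_extPowEvalOne_mk₀ {k : ℕ} (f : powQuot 𝔞 k ⟶ M) :
    (extPowEvalOne 𝔞 M k (Abelian.Ext.mk₀ f) : M) = f.hom 1 :=
  congr(ModuleCat.Hom.hom $(Abelian.Ext.addEquiv₀.apply_symm_apply f) 1)

lemma extPowEvalOne_extPowMap {k l : ℕ} (h : k ≤ l) (x : Abelian.Ext.{u} (powQuot 𝔞 k) M 0) :
    extPowEvalOne 𝔞 M l (extPowMap 𝔞 M 0 h x) = extPowEvalOne 𝔞 M k x := by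
  obtain ⟨f, rfl⟩ := (Abelian.Ext.mk₀_bijective _ _).2 x
  rw [Subtype.ext_iff, extPowMap_apply, Abelian.Ext.mk₀_comp_mk₀, coe_extPowEvalOne_mk₀,
    coe_extPowEvalOne_mk₀]
  rfl

lemma extPowEvalOne_injective (k : ℕ) : Function.Injective (extPowEvalOne 𝔞 M k) := by
  refine (injective_iff_map_eq_zero _).2 fun x hx ↦ ?_
  obtain ⟨f, rfl⟩ := (Abelian.Ext.mk₀_bijective _ _).2 x
  rw [Abelian.Ext.mk₀_eq_zero_iff]
  ext
  exact (coe_extPowEvalOne_mk₀ 𝔞 f).symm.trans congr($hx)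

lemma exists_extPowEvalOne_eq (y : 𝔞.primaryComponent M) : ∃ k x, extPowEvalOne 𝔞 M k x = y := by
  obtain ⟨k, hk⟩ := mem_primaryComponent_iff.1 y.2
  refine ⟨k, Abelian.Ext.mk₀ (ModuleCat.ofHom
    (Submodule.liftQ _ (LinearMap.toSpanSingleton R M y) hk)), Subtype.ext ?_⟩
  rw [coe_extPowEvalOne_mk₀]
  exact one_smul R (y : M)

variable (M)

/-- The isomorphism `H^0_𝔞(M) ≃ Γ M`. -/
noncomputable def localCohomologyZeroEquiv :
    (localCohomology 𝔞 0).obj M ≃ₗ[R] 𝔞.primaryComponent M :=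
  (extPowLimitEquivLocalCohomology 𝔞 M 0).symm ≪≫ₗ
    .ofBijective _ (directLimit_lift_bijective (extPowEvalOne 𝔞 M)
      (fun _ _ h ↦ extPowEvalOne_extPowMap 𝔞 h)
      (fun k _ hx ↦ ⟨k, le_rfl, by
        rw [(injective_iff_map_eq_zero _).1 (extPowEvalOne_injective 𝔞 k) _ hx, map_zero]⟩)
      (exists_extPowEvalOne_eq 𝔞))

end DegreeZero

section DimensionShift

variable {R : Type u} [CommRing R] (𝔞 : Ideal R) (M : ModuleCat.{u} R)

/-- The torsion-free quotient `E ⧸ Γ E` of an injective module `E` containing `M`. -/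
noncomputable abbrev injectiveTorsionFree : ModuleCat.{u} R :=
  let E : ModuleCat.{u} R := Injective.under M
  .of R (E ⧸ 𝔞.primaryComponent E)

/-- The embedding of `M ⧸ Γ M` in the injective torsion-free module `E ⧸ Γ E`. -/
noncomputable def torsionFreeEmbedding :
    (primaryComponentShortComplex 𝔞 M).X₃ ⟶ injectiveTorsionFree 𝔞 M :=
  ModuleCat.ofHom (Submodule.mapQ _ _ (Injective.ι M).hom fun x hx ↦
    Ideal.primaryComponent_map_mem 𝔞 (Injective.ι M).hom ⟨x, hx⟩)

instance mono_torsionFreeEmbedding : Mono (torsionFreeEmbedding 𝔞 M) := by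
  refine (ModuleCat.mono_iff_injective _).2
    (LinearMap.ker_eq_bot.1 (Submodule.ker_liftQ_eq_bot _ _ _ ?_))
  rw [LinearMap.ker_comp, Submodule.ker_mkQ]
  exact fun x ↦ (map_mem_primaryComponent_iff
    ((ModuleCat.mono_iff_injective (Injective.ι M)).1 inferInstance)).1

/-- The cokernel `M'` of the embedding of `M ⧸ Γ M` in an injective torsion-free module; the local
cohomology of `M'` is that of `M` with degrees lowered by one. -/
noncomputable def dimensionShift : ModuleCat.{u} R :=
  Limits.cokernel (torsionFreeEmbedding 𝔞 M)

/-- The short exact sequence `0 → M ⧸ Γ M → E ⧸ Γ E → M' → 0`. -/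
noncomputable abbrev dimensionShiftShortComplex : ShortComplex (ModuleCat.{u} R) :=
  .mk (torsionFreeEmbedding 𝔞 M) (Limits.cokernel.π _ : _ ⟶ dimensionShift 𝔞 M)
    (Limits.cokernel.condition _)

lemma dimensionShiftShortComplex_shortExact : (dimensionShiftShortComplex 𝔞 M).ShortExact :=
  shortExact_cokernel _

variable [IsNoetherianRing R] {𝔞 M} {N : ModuleCat.{u} R}

lemma IsTorsionIdeal.subsingleton_ext_injectiveTorsionFree (hN : IsTorsionIdeal 𝔞 N) (n : ℕ) :
    Subsingleton (Abelian.Ext.{u} N (injectiveTorsionFree 𝔞 M) n) :=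
  hN.subsingleton_ext (primaryComponent_quotient_primaryComponent (IsNoetherian.noetherian 𝔞)) n

lemma IsTorsionIdeal.ext_postcomp_extClass_dimensionShift_bijective (hN : IsTorsionIdeal 𝔞 N)
    (n : ℕ) : Function.Bijective
      ((dimensionShiftShortComplex_shortExact 𝔞 M).extClass.postcomp N (rfl : n + 1 = n + 1)) :=
  ext_postcomp_extClass_bijective _ rfl (hN.subsingleton_ext_injectiveTorsionFree n)
    (hN.subsingleton_ext_injectiveTorsionFree (n + 1))

variable (M) in
/-- The connecting isomorphism `Ext^n(N, M') ≃ Ext^{n+1}(N, M ⧸ Γ M)` for a torsion module `N`. -/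
noncomputable def IsTorsionIdeal.extDimensionShiftEquiv (hN : IsTorsionIdeal 𝔞 N) (n : ℕ) :
    Abelian.Ext.{u} N (dimensionShift 𝔞 M) n ≃ₗ[R]
      Abelian.Ext.{u} N (primaryComponentShortComplex 𝔞 M).X₃ (n + 1) :=
  .ofBijective ((dimensionShiftShortComplex_shortExact 𝔞 M).extClass.postcompOfLinear R N rfl)
    (hN.ext_postcomp_extClass_dimensionShift_bijective n)

variable (𝔞 M)

lemma extPowLimitMap_quotient_primaryComponent_bijective (i : ℕ) :
    Function.Bijective (extPowLimitMap 𝔞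
      (Abelian.Ext.mk₀ (primaryComponentShortComplex 𝔞 M).g) (add_zero (i + 1))) := by
  have hS := primaryComponentShortComplex_shortExact 𝔞 M
  have torsion : IsTorsionIdeal 𝔞 (𝔞.primaryComponent M) := isTorsionIdeal_primaryComponent
  refine directLimit_map_bijective _ _ (fun k x hx ↦ ?_) fun k y ↦ ?_
  · obtain ⟨z, rfl⟩ := Abelian.Ext.covariant_sequence_exact₂ _ hS x hx
    obtain ⟨l, h, hl⟩ := torsion.exists_extPowMap_eq_zero z
    exact ⟨l, h, by rw [extPowMap_comp, hl, Abelian.Ext.zero_comp]⟩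
  · obtain ⟨l, h, hl⟩ := torsion.exists_extPowMap_eq_zero (y.comp hS.extClass rfl)
    rw [extPowMap_comp] at hl
    exact ⟨l, h, Abelian.Ext.covariant_sequence_exact₃ _ hS _ rfl hl⟩

lemma extPowLimitMap_extClass_dimensionShift_bijective (i : ℕ) :
    Function.Bijective (extPowLimitMap 𝔞
      (dimensionShiftShortComplex_shortExact 𝔞 M).extClass (rfl : i + 1 = i + 1)) := by
  have bijective (k : ℕ) := (isTorsionIdeal_quotient_pow (𝔞 := 𝔞)
    k).ext_postcomp_extClass_dimensionShift_bijective (N := powQuot 𝔞 k) (M := M) i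
  refine directLimit_map_bijective _ _ (fun k x hx ↦ ⟨k, le_rfl, ?_⟩) fun k y ↦ ?_
  · rw [(injective_iff_map_eq_zero _).1 (bijective k).1 x hx, map_zero]
  · obtain ⟨x, hx⟩ := (bijective k).2 y
    exact ⟨k, le_rfl, x, hx.trans (extPowMap_refl 𝔞 y).symm⟩

/-- The isomorphism `H^i_𝔞(M') ≃ H^{i+1}_𝔞(M)`. -/
noncomputable def localCohomologyDimensionShiftEquiv (i : ℕ) :
    (localCohomology 𝔞 i).obj (dimensionShift 𝔞 M) ≃ₗ[R] (localCohomology 𝔞 (i + 1)).obj M :=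
  (extPowLimitEquivLocalCohomology 𝔞 _ i).symm ≪≫ₗ
    .ofBijective _ (extPowLimitMap_extClass_dimensionShift_bijective 𝔞 M i) ≪≫ₗ
    (LinearEquiv.ofBijective _ (extPowLimitMap_quotient_primaryComponent_bijective 𝔞 M i)).symm ≪≫ₗ
    extPowLimitEquivLocalCohomology 𝔞 M (i + 1)

end DimensionShift

namespace IsTorsionIdeal

variable {R : Type u} [CommRing R] [IsNoetherianRing R] {𝔞 : Ideal R} {N : ModuleCat.{u} R}
  (hN : IsTorsionIdeal 𝔞 N)

include hN

lemma subsingleton_ext_quotient_primaryComponent (n : ℕ) (M : ModuleCat.{u} R)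
    (h : ∀ i j, i + 1 + j = n →
      Subsingleton (Abelian.Ext.{u} N ((localCohomology 𝔞 (i + 1)).obj M) j)) :
    Subsingleton (Abelian.Ext.{u} N (primaryComponentShortComplex 𝔞 M).X₃ n) := by
  induction n generalizing M with
  | zero =>
    have := hN.subsingleton_ext_injectiveTorsionFree (M := M) 0
    exact subsingleton_ext_of_mono (torsionFreeEmbedding 𝔞 M)
  | succ n ih =>
    let M' := dimensionShift 𝔞 M
    have h' (i j : ℕ) (hij : i + j = n) :
        Subsingleton (Abelian.Ext.{u} N ((localCohomology 𝔞 i).obj M') j) :=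
      have := h i j (by lia)
      (extPostcompEquiv N R (localCohomologyDimensionShiftEquiv 𝔞 M i).toModuleIso j).subsingleton
    have h₁ : Subsingleton (Abelian.Ext.{u} N (primaryComponentShortComplex 𝔞 M').X₁ n) :=
      have := h' 0 n (zero_add n)
      (extPostcompEquiv N R (localCohomologyZeroEquiv 𝔞 M').toModuleIso n).symm.subsingleton
    have : Subsingleton (Abelian.Ext.{u} N M' n) :=
      subsingleton_ext_of_shortExact (primaryComponentShortComplex_shortExact 𝔞 M') h₁
        (ih M' fun i j hij ↦ h' _ _ hij)
    exact (hN.extDimensionShiftEquiv M n).symm.subsingleton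

-- Hypothesis `h` says that in the spectral sequence `Ext^j(N, H^i(M)) ⇒ Ext^{i+j}(N, M)` the term
-- `(i, j) = (t, s)` is alone on its diagonal and meets no nonzero differential.
lemma nonempty_ext_equiv_ext_localCohomology (s t : ℕ) (M : ModuleCat.{u} R)
    (h : ∀ i j, (i + j = s + t ∧ i ≠ t) ∨ (i + j = s + t + 1 ∧ i < t) ∨
        (i + j + 1 = s + t ∧ t < i) →
      Subsingleton (Abelian.Ext.{u} N ((localCohomology 𝔞 i).obj M) j)) :
    Nonempty (Abelian.Ext.{u} N M (s + t) ≃ₗ[R]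
      Abelian.Ext.{u} N ((localCohomology 𝔞 t).obj M) s) := by
  induction t generalizing M with
  | zero =>
    have f_bijective := ext_postcomp_f_bijective (primaryComponentShortComplex_shortExact 𝔞 M)
      (hN.subsingleton_ext_quotient_primaryComponent s M fun i j hij ↦ h _ _ (by lia))
      fun m hm ↦ hN.subsingleton_ext_quotient_primaryComponent m M fun i j hij ↦ h _ _ (by lia)
    exact ⟨(LinearEquiv.ofBijective ((Abelian.Ext.mk₀ _).postcompOfLinear R N _)
      f_bijective).symm ≪≫ₗ
        (extPostcompEquiv N R (localCohomologyZeroEquiv 𝔞 M).toModuleIso s).symm⟩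
  | succ t ih =>
    have torsion_subsingleton (j : ℕ) (hj : j = s + (t + 1) ∨ j = s + (t + 1) + 1) :
        Subsingleton (Abelian.Ext.{u} N (primaryComponentShortComplex 𝔞 M).X₁ j) :=
      have := h 0 j (by lia)
      (extPostcompEquiv N R (localCohomologyZeroEquiv 𝔞 M).toModuleIso j).symm.subsingleton
    have g_bijective := ext_postcomp_g_bijective (primaryComponentShortComplex_shortExact 𝔞 M)
      (torsion_subsingleton _ (.inl rfl)) (torsion_subsingleton _ (.inr rfl))
    let shift (i j : ℕ) := extPostcompEquiv N R
      (localCohomologyDimensionShiftEquiv 𝔞 M i).toModuleIso j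
    obtain ⟨e⟩ := ih (dimensionShift 𝔞 M) fun i j hij ↦
      have := h (i + 1) j (by lia)
      (shift i j).subsingleton
    exact ⟨.ofBijective ((Abelian.Ext.mk₀ _).postcompOfLinear R N _) g_bijective ≪≫ₗ
      (hN.extDimensionShiftEquiv M (s + t)).symm ≪≫ₗ e ≪≫ₗ shift t s⟩

end IsTorsionIdeal

theorem ext_isomorphic_ext_localCohomology_of_torsion_general
    {R : Type u} [CommRing R] [IsNoetherianRing R] (𝔞 : Ideal R)
    (N : ModuleCat.{u} R) (htor : IsTorsionIdeal 𝔞 N) (M : ModuleCat.{u} R) (s t : ℕ)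
    (h1 : ∀ i : ℕ, (i < t ∨ (t + 1 ≤ i ∧ i ≤ s + t)) →
      Subsingleton (extObj N ((localCohomology 𝔞 i).obj M) (s + t - i)))
    (h2 : ∀ i : ℕ, 1 ≤ i → i ≤ t →
      Subsingleton (extObj N ((localCohomology 𝔞 (t - i)).obj M) (s + 1 + i)))
    (h3 : ∀ i : ℕ, 1 ≤ i → i < s →
      Subsingleton (extObj N ((localCohomology 𝔞 (t + i)).obj M) (s - 1 - i))) :
    Nonempty ((extObj N M (s + t)) ≃ₗ[R]
      (extObj N ((localCohomology 𝔞 t).obj M) s)) := by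
  obtain ⟨e⟩ := htor.nonempty_ext_equiv_ext_localCohomology s t M fun i j hij ↦ by
    suffices h : Subsingleton (extObj N ((localCohomology 𝔞 i).obj M) j) from
      (abelianExtEquivExt R N _ j).toEquiv.subsingleton_congr.2 h
    obtain ⟨hij, hi⟩ | ⟨hij, hi⟩ | ⟨hij, hi⟩ := hij
    · obtain rfl : j = s + t - i := by lia
      exact h1 i (by lia)
    · obtain ⟨d, rfl⟩ := Nat.exists_eq_add_of_le hi.le
      obtain rfl : j = s + 1 + d := by lia
      simpa only [Nat.add_sub_cancel] using h2 d (by lia) (by lia)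
    · obtain ⟨d, rfl⟩ := Nat.exists_eq_add_of_le hi.le
      obtain rfl : j = s - 1 - d := by lia
      exact h3 d (by lia) (by lia)
  exact ⟨(abelianExtEquivExt R N M (s + t)).symm ≪≫ₗ e ≪≫ₗ abelianExtEquivExt R N _ s⟩

/-- Yang–Shen, Corollary 4.6: let `𝔞` be a proper ideal of a noetherian ring `R`, `N` a
finitely generated `𝔞`-torsion `R`-module, `M` an `R`-module and `s, t ≥ 0` integers such that
(1) `Ext^{s+t-i}_R(N, H^i_𝔞(M)) = 0` for `0 ≤ i < t` and for `t+1 ≤ i ≤ s+t`;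
(2) `Ext^{s+1+i}_R(N, H^{t-i}_𝔞(M)) = 0` for `0 ≤ i ≤ t`;
(3) `Ext^{s-1-i}_R(N, H^{t+i}_𝔞(M)) = 0` for `0 ≤ i ≤ s-1`.
Then `Ext^{s+t}_R(N, M) ≅ Ext^s_R(N, H^t_𝔞(M))`. -/
theorem ext_isomorphic_ext_localCohomology_of_torsion
    {R : Type u} [CommRing R] [IsNoetherianRing R] (𝔞 : Ideal R) (ha : 𝔞 ≠ ⊤)
    (N : ModuleCat.{u} R) (hfg : Module.Finite R N) (htor : IsTorsionIdeal 𝔞 N)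
    (M : ModuleCat.{u} R) (s t : ℕ)
    (h1 : ∀ i : ℕ, (i < t ∨ (t + 1 ≤ i ∧ i ≤ s + t)) →
      Subsingleton (extObj N ((localCohomology 𝔞 i).obj M) (s + t - i)))
    (h2 : ∀ i : ℕ, i ≤ t →
      Subsingleton (extObj N ((localCohomology 𝔞 (t - i)).obj M) (s + 1 + i)))
    (h3 : ∀ i : ℕ, i < s →
      Subsingleton (extObj N ((localCohomology 𝔞 (t + i)).obj M) (s - 1 - i))) :
    Nonempty ((extObj N M (s + t)) ≃ₗ[R]
      (extObj N ((localCohomology 𝔞 t).obj M) s)) :=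
  ext_isomorphic_ext_localCohomology_of_torsion_general 𝔞 N htor M s t h1
    (fun i _ ↦ h2 i) fun i _ ↦ h3 i
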